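/- Proposition 1, part (3) (over-investment in the most important feature under Prelec misperception). Let γ ∈ (0, 1) and let p(z) = exp(−(−log z)^γ) be the Prelec weighting function. Let θ_max ∈ (0, 1) be the largest true feature weight, and suppose the biased agent perceives it as p(θ_max) with p(θ_max) < θ_max. Let d_NB ∈ ℝ and d_B ≥ 0 be the agent's signed distances to the true and perceived decision boundaries, and set δ_max^NB = d_NB·θ_max and δ_max^B = d_B·p(θ_max). If d_NB ≤ exp(γ^{1/(1−γ)} − γ^{γ/(1−γ)})·d_B, then δ_max^NB ≤ δ_max^B. -/

import Mathlib

/-!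
In the variable `t = -log z ≥ 0` the ratio of the Prelec weight of `z` to `z` is
`exp (-(t ^ γ - t))`. The concave function `t ^ γ - t` is largest where `γ * t ^ (γ - 1) = 1`, that
is at `t = γ ^ (1 / (1 - γ))`, so the factor `exp (γ ^ (1 / (1 - γ)) - γ ^ (γ / (1 - γ)))` is the
least value of this ratio: misperception shrinks a weight by no more than this
factor, and a perceived distance that is larger by the inverse factor makes up for the loss.
-/

/-- The Prelec probability weighting function with parameter `γ`. It is meaningful for
`z ∈ (0, 1]`; at `z = 0` the convention `Real.log 0 = 0` makes it `1` for `γ ≠ 0`, not the limit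
`0`. -/
noncomputable def prelecWeight (γ z : ℝ) : ℝ :=
  Real.exp (-((-Real.log z) ^ γ))

section

variable {γ : ℝ}

theorem rpow_one_div_one_sub (hγ : 0 < γ) (hγ' : γ ≠ 1) :
    γ ^ (1 / (1 - γ)) = γ * γ ^ (γ / (1 - γ)) := by
  have hexp : 1 / (1 - γ) = 1 + γ / (1 - γ) := by
    have : 1 - γ ≠ 0 := sub_ne_zero.mpr hγ'.symm
    field_simp
    ring
  rw [hexp, Real.rpow_add hγ, Real.rpow_one]

theorem rpow_sub_self_le (hγ : γ ∈ Set.Ioo (0 : ℝ) 1) {t : ℝ} (ht : 0 ≤ t) :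
    t ^ γ - t ≤ γ ^ (γ / (1 - γ)) - γ ^ (1 / (1 - γ)) := by
  obtain ⟨hγ₀, hγ₁⟩ := hγ
  -- Weighted AM-GM for two quantities that agree at the maximizer of `t ^ γ - t`.
  have hgeom : (t / γ) ^ γ * (γ ^ (γ / (1 - γ))) ^ (1 - γ) = t ^ γ := by
    rw [← Real.rpow_mul hγ₀.le, div_mul_cancel₀ _ (sub_pos.mpr hγ₁).ne',
      Real.div_rpow ht hγ₀.le, div_mul_cancel₀ _ (Real.rpow_pos_of_pos hγ₀ γ).ne']
  have hamgm : t ^ γ ≤ γ * (t / γ) + (1 - γ) * γ ^ (γ / (1 - γ)) :=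
    hgeom ▸ Real.geom_mean_le_arith_mean2_weighted hγ₀.le (sub_pos.mpr hγ₁).le
      (div_nonneg ht hγ₀.le) (Real.rpow_nonneg hγ₀.le _) (add_sub_cancel γ 1)
  rw [mul_div_cancel₀ t hγ₀.ne'] at hamgm
  rw [rpow_one_div_one_sub hγ₀ hγ₁.ne]
  linarith

theorem exp_mul_le_prelecWeight (hγ : γ ∈ Set.Ioo (0 : ℝ) 1) {z : ℝ}
    (hz : z ∈ Set.Ioc (0 : ℝ) 1) :
    Real.exp (γ ^ (1 / (1 - γ)) - γ ^ (γ / (1 - γ))) * z ≤ prelecWeight γ z := by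
  have hlog : 0 ≤ -Real.log z := neg_nonneg.mpr (Real.log_nonpos hz.1.le hz.2)
  calc Real.exp (γ ^ (1 / (1 - γ)) - γ ^ (γ / (1 - γ))) * z
      = Real.exp (γ ^ (1 / (1 - γ)) - γ ^ (γ / (1 - γ)) + Real.log z) := by
        rw [Real.exp_add, Real.exp_log hz.1]
    _ ≤ prelecWeight γ z := Real.exp_le_exp.mpr (by linarith [rpow_sub_self_le hγ hlog])

theorem over_invest_most_important_feature_prelec_general (hγ : γ ∈ Set.Ioo (0 : ℝ) 1)
    {θ : ℝ} (hθ : θ ∈ Set.Ioc (0 : ℝ) 1) {dNB dB : ℝ} (hdB : 0 ≤ dB)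
    (h : dNB ≤ Real.exp (γ ^ (1 / (1 - γ)) - γ ^ (γ / (1 - γ))) * dB) :
    dNB * θ ≤ dB * prelecWeight γ θ :=
  calc dNB * θ
      ≤ Real.exp (γ ^ (1 / (1 - γ)) - γ ^ (γ / (1 - γ))) * dB * θ :=
        mul_le_mul_of_nonneg_right h hθ.1.le
    _ = dB * (Real.exp (γ ^ (1 / (1 - γ)) - γ ^ (γ / (1 - γ))) * θ) := by ring
    _ ≤ dB * prelecWeight γ θ :=
        mul_le_mul_of_nonneg_left (exp_mul_le_prelecWeight hγ hθ) hdB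

end

/-- Proposition 1, part (3): over-investment in the most important feature under
Prelec misperception. -/
theorem over_invest_most_important_feature_prelec
    (γ : ℝ) (hγ : γ ∈ Set.Ioo (0 : ℝ) 1)
    (p : ℝ → ℝ) (hp : ∀ z, p z = Real.exp (-((-Real.log z) ^ γ)))
    (θmax : ℝ) (hθmax : θmax ∈ Set.Ioo (0 : ℝ) 1)
    (hmis : p θmax < θmax)
    (dNB dB : ℝ) (hdB : 0 ≤ dB)
    (δNB δB : ℝ)
    (hδNB : δNB = dNB * θmax) (hδB : δB = dB * p θmax)
    (h : dNB ≤ Real.exp (γ ^ (1 / (1 - γ)) - γ ^ (γ / (1 - γ))) * dB) :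
    δNB ≤ δB := by
  rw [hδNB, hδB, hp]
  exact over_invest_most_important_feature_prelec_general hγ (Set.Ioo_subset_Ioc_self hθmax) hdB h
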